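/- Let d ≥ 3 be an integer and let T be a nonempty subset of ℕ_0^d with dim(T) = 2. Then the 2-completion of T satisfies E_2^∞(T) = Λ(T) ∩ ℕ_0^d. -/

import Mathlib

open MeasureTheory
open scoped Classical ENNReal

noncomputable section

/-- The `d`-dimensional torus, modelled as `d` copies of `ℝ/ℤ`,
whose product `volume` measure is the normalized Haar measure. -/
abbrev Torus (d : ℕ) := Fin d → AddCircle (1 : ℝ)

/-- The character `z ↦ z^α` on the torus. -/
def torusChar {d : ℕ} (α : Fin d → ℤ) (x : Torus d) : ℂ :=
  ∏ j, fourier (α j) (x j)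

/-- The trigonometric polynomial with frequencies in `F` and coefficients `a`. -/
def trigPoly {d : ℕ} (F : Finset (Fin d → ℤ)) (a : (Fin d → ℤ) → ℂ) (x : Torus d) : ℂ :=
  ∑ α ∈ F, a α * torusChar α x

/-- The set `ℕ₀^d` of multi-indices with nonnegative entries. -/
def NN (d : ℕ) : Set (Fin d → ℤ) := {α | ∀ j, 0 ≤ α j}

/-- `Λ` is a coset in `ℤ^d`, i.e. a translate of a subgroup. -/
def IsCoset {d : ℕ} (Λ : Set (Fin d → ℤ)) : Prop :=
  ∃ (x : Fin d → ℤ) (H : AddSubgroup (Fin d → ℤ)),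
    Λ = (x + ·) '' (H : Set (Fin d → ℤ))

/-- `Λ` is a contractive projection set for `L^p(𝕋^d)`:
the projection onto frequencies in `Λ` is contractive on trigonometric polynomials. -/
def IsContractiveLp (d : ℕ) (p : ℝ≥0∞) (Λ : Set (Fin d → ℤ)) : Prop :=
  ∀ (F : Finset (Fin d → ℤ)) (a : (Fin d → ℤ) → ℂ),
    eLpNorm (trigPoly (F.filter (· ∈ Λ)) a) p volume ≤ eLpNorm (trigPoly F a) p volume

/-- `Γ` is a contractive projection set for `H^p(𝕋^d)`:
the projection onto frequencies in `Γ` is contractive on analytic polynomials. -/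
def IsContractiveHp (d : ℕ) (p : ℝ≥0∞) (Γ : Set (Fin d → ℤ)) : Prop :=
  ∀ F : Finset (Fin d → ℤ), ↑F ⊆ NN d → ∀ a : (Fin d → ℤ) → ℂ,
    eLpNorm (trigPoly (F.filter (· ∈ Γ)) a) p volume ≤ eLpNorm (trigPoly F a) p volume

/-- `Γ` has dimension `k`: the subgroup generated by the differences `γ - γ₀` has rank `k`. -/
def HasDim {d : ℕ} (Γ : Set (Fin d → ℤ)) (k : ℕ) : Prop :=
  ∀ γ₀ ∈ Γ, Module.finrank ℤ (Submodule.span ℤ ((· - γ₀) '' Γ)) = k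

/-- `H^p(𝕋^d)` enjoys the contractive restriction property of dimension `k`:
every `k`-dimensional contractive projection set for `H^p(𝕋^d)` is the restriction
of a coset in `ℤ^d` to `ℕ₀^d`. -/
def ContractiveRestrictionProperty (d : ℕ) (p : ℝ≥0∞) (k : ℕ) : Prop :=
  ∀ Γ : Set (Fin d → ℤ), Γ.Nonempty → Γ ⊆ NN d → HasDim Γ k → IsContractiveHp d p Γ →
    ∃ Λ : Set (Fin d → ℤ), IsCoset Λ ∧ Γ = Λ ∩ NN d

/-- The coset `Λ(Γ)` in `ℤ^d` generated by `Γ`. -/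
def cosetGen {d : ℕ} (Γ : Set (Fin d → ℤ)) : Set (Fin d → ℤ) :=
  ⋃ γ₀ ∈ Γ, (γ₀ + ·) '' (AddSubgroup.closure ((· - γ₀) '' Γ) : Set (Fin d → ℤ))

/-- The `n`-extension `E_n(Γ)`: all points of `Λ(Γ) ∩ ℕ₀^d` at distance at most `n` from `Γ`. -/
def Eext {d : ℕ} (n : ℕ) (Γ : Set (Fin d → ℤ)) : Set (Fin d → ℤ) :=
  {lam | lam ∈ cosetGen Γ ∩ NN d ∧ ∃ γ ∈ Γ, ∃ m : (Fin d → ℤ) →₀ ℤ,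
    (↑m.support : Set (Fin d → ℤ)) ⊆ Γ \ {γ} ∧
    lam = γ + ∑ α ∈ m.support, m α • (α - γ) ∧
    (∑ α ∈ m.support, max (m α) 0) ≤ (n : ℤ) ∧
    (∑ α ∈ m.support, max (-(m α)) 0) ≤ (n : ℤ)}

/-- Iterated `n`-extensions `E_n^k(Γ)`. -/
def EextIter {d : ℕ} (n : ℕ) : ℕ → Set (Fin d → ℤ) → Set (Fin d → ℤ)
  | 0, Γ => Eext n Γ
  | (k + 1), Γ => Eext n (EextIter n k Γ)

/-- The `n`-completion `E_n^∞(Γ)`. -/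
def EextInf {d : ℕ} (n : ℕ) (Γ : Set (Fin d → ℤ)) : Set (Fin d → ℤ) :=
  ⋃ k, EextIter n k Γ

/-- Twice the signed area of a lattice triangle. -/
def tdet (A B C : ℤ × ℤ) : ℤ :=
  (B.1 - A.1) * (C.2 - A.2) - (B.2 - A.2) * (C.1 - A.1)

/-- `m X = a A + b B + c C` with `a + b + c = m`. -/
def Bary (m : ℤ) (A B C X : ℤ × ℤ) (a b c : ℤ) : Prop :=
  a + b + c = m ∧ m * X.1 = a * A.1 + b * B.1 + c * C.1 ∧ m * X.2 = a * A.2 + b * B.2 + c * C.2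

theorem Bary.rot {m : ℤ} {A B C X : ℤ × ℤ} {a b c : ℤ} (h : Bary m A B C X a b c) :
    Bary m B C A X b c a := by
  obtain ⟨h1, h2, h3⟩ := h
  exact ⟨by linarith, by linarith, by linarith⟩

theorem Bary.swap {m : ℤ} {A B C X : ℤ × ℤ} {a b c : ℤ} (h : Bary m A B C X a b c) :
    Bary m A C B X a c b := by
  obtain ⟨h1, h2, h3⟩ := h
  exact ⟨by linarith, by linarith, by linarith⟩

theorem abs_tdet_rot (A B C : ℤ × ℤ) : |tdet B C A| = |tdet A B C| := by
  congr 1; unfold tdet; ring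

theorem abs_tdet_swap (A B C : ℤ × ℤ) : |tdet A C B| = |tdet A B C| := by
  rw [← abs_neg]; congr 1; unfold tdet; ring

theorem Bary.abs_fst {m : ℤ} (hm : 0 < m) {A B C X : ℤ × ℤ} {a b c : ℤ}
    (h : Bary m A B C X a b c) (hd : |tdet A B C| = m) : |tdet X B C| = |a| := by
  obtain ⟨h1, h2, h3⟩ := h
  have e : m * tdet X B C = a * tdet A B C := by
    have hc : c = m - a - b := by linarith
    subst hc
    unfold tdet
    linear_combination (B.2 - C.2) * h2 + (C.1 - B.1) * h3
  have e2 := congrArg abs e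
  rw [abs_mul, abs_mul, hd, abs_of_pos hm, mul_comm |a|] at e2
  exact mul_left_cancel₀ hm.ne' e2

theorem exists_minimal_nat {p : ℕ → Prop} (h : ∃ n, p n) : ∃ n, p n ∧ ∀ k < n, ¬ p k := by
  classical
  exact ⟨Nat.find h, Nat.find_spec h, fun k hk => Nat.find_min h hk⟩

section core

variable {Γ P : Set (ℤ × ℤ)}

theorem core_ind (hΓP : Γ ⊆ P)
    (hconv : ∀ p ∈ P, ∀ q ∈ P, ∀ r ∈ P, ∀ D : ℤ × ℤ, ∀ k a b c : ℤ, 0 < k → 0 ≤ a → 0 ≤ b → 0 ≤ c →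
      k * D.1 = a * p.1 + b * q.1 + c * r.1 → k * D.2 = a * p.2 + b * q.2 + c * r.2 →
      a + b + c = k → D ∈ P)
    (hcl : ∀ a ∈ Γ, ∀ b ∈ Γ, ∀ c ∈ Γ, ∀ d ∈ Γ, ∀ e ∈ Γ, a + b + c - d - e ∈ P →
      a + b + c - d - e ∈ Γ)
    (m : ℤ) (hm : 0 < m)
    (hmin : ∀ p ∈ Γ, ∀ q ∈ Γ, ∀ r ∈ Γ, tdet p q r = 0 ∨ m ≤ |tdet p q r|) (n : ℕ) :
    ∀ (A B C X : ℤ × ℤ) (a b c : ℤ), A ∈ Γ → B ∈ Γ → C ∈ Γ → X ∈ P → (X ∈ Γ ∨ m = 1) →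
      |tdet A B C| = m → Bary m A B C X a b c → |a| + |b| + |c| ≤ n →
      X ∈ Γ ∧ m ∣ a ∧ m ∣ b ∧ m ∣ c := by
  induction n with
  | zero =>
    intro A B C X a b c _ _ _ _ _ _ hB hn
    have := hB.1
    exfalso
    have h1 := abs_nonneg a
    have h2 := abs_nonneg b
    have h3 := abs_nonneg c
    have h4 := le_abs_self a
    have h5 := le_abs_self b
    have h6 := le_abs_self c
    push_cast at hn
    linarith
  | succ n ih =>
    -- reflection in an edge
    have key1 : ∀ (A B C X : ℤ × ℤ) (a b c : ℤ), A ∈ Γ → B ∈ Γ → C ∈ Γ → X ∈ P →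
        (X ∈ Γ ∨ m = 1) → |tdet A B C| = m → Bary m A B C X a b c →
        |a| + |b| + |c| ≤ (n + 1 : ℕ) → a ≤ -m → m ≤ b → m ≤ c →
        X ∈ Γ ∧ m ∣ a ∧ m ∣ b ∧ m ∣ c := by
      intro A B C X a b c hA hB hC hX hX' hd hbar hn ha hb hc
      have hbar' := hbar
      obtain ⟨h1, h2, h3⟩ := hbar
      have hDP : B + C + C - A - C ∈ P := by
        refine hconv X hX B (hΓP hB) C (hΓP hC) _ (-a) m (-a - b) (-a - c) (by linarith) hm.le
          (by linarith) (by linarith) ?_ ?_ (by linarith)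
        · simp only [Prod.fst_add, Prod.fst_sub]; linear_combination -h2
        · simp only [Prod.snd_add, Prod.snd_sub]; linear_combination -h3
      have hD := hcl B hB C hC C hC A hA C hC hDP
      have := ih (B + C + C - A - C) B C X (-a) (b + a) (c + a) hD hB hC hX hX' ?_
        ⟨by linarith, ?_, ?_⟩ ?_
      · obtain ⟨r1, r2, r3, r4⟩ := this
        have ra : m ∣ a := (dvd_neg).1 r2
        exact ⟨r1, ra, (dvd_add_left ra).1 r3, (dvd_add_left ra).1 r4⟩
      · rw [← hd, ← abs_neg]; congr 1
        unfold tdet; simp only [Prod.fst_add, Prod.fst_sub, Prod.snd_add, Prod.snd_sub]; ring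
      · simp only [Prod.fst_add, Prod.fst_sub]; linear_combination h2
      · simp only [Prod.snd_add, Prod.snd_sub]; linear_combination h3
      · push_cast at hn
        rw [abs_of_nonpos (by linarith : a ≤ 0), abs_of_nonneg (by linarith : 0 ≤ b),
          abs_of_nonneg (by linarith : 0 ≤ c)] at hn
        rw [abs_of_nonneg (by linarith : 0 ≤ -a), abs_of_nonpos (by linarith : b + a ≤ 0),
          abs_of_nonpos (by linarith : c + a ≤ 0)]
        linarith
    -- reflection in a vertex
    have key2 : ∀ (A B C X : ℤ × ℤ) (a b c : ℤ), A ∈ Γ → B ∈ Γ → C ∈ Γ → X ∈ P →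
        (X ∈ Γ ∨ m = 1) → |tdet A B C| = m → Bary m A B C X a b c →
        |a| + |b| + |c| ≤ (n + 1 : ℕ) → b ≤ -m → c ≤ 0 → b ≤ c - m →
        X ∈ Γ ∧ m ∣ a ∧ m ∣ b ∧ m ∣ c := by
      intro A B C X a b c hA hB hC hX hX' hd hbar hn hb hc hbc
      obtain ⟨h1, h2, h3⟩ := hbar
      have hDP : A + A + C - B - C ∈ P := by
        refine hconv X hX A (hΓP hA) C (hΓP hC) _ (-b) m (-b + c - m) (-c) (by linarith) hm.le
          (by linarith) (by linarith) ?_ ?_ (by linarith)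
        · simp only [Prod.fst_add, Prod.fst_sub]
          linear_combination -h2 - A.1 * h1
        · simp only [Prod.snd_add, Prod.snd_sub]
          linear_combination -h3 - A.2 * h1
      have hD := hcl A hA A hA C hC B hB C hC hDP
      have := ih A (A + A + C - B - C) C X (a + 2 * b) (-b) c hA hD hC hX hX' ?_
        ⟨by linarith, ?_, ?_⟩ ?_
      · obtain ⟨r1, r2, r3, r4⟩ := this
        have rb : m ∣ b := (dvd_neg).1 r3
        exact ⟨r1, (dvd_add_left (rb.mul_left 2)).1 r2, rb, r4⟩
      · rw [← hd, ← abs_neg]; congr 1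
        unfold tdet; simp only [Prod.fst_add, Prod.fst_sub, Prod.snd_add, Prod.snd_sub]; ring
      · simp only [Prod.fst_add, Prod.fst_sub]; linear_combination h2
      · simp only [Prod.snd_add, Prod.snd_sub]; linear_combination h3
      · push_cast at hn
        rw [abs_of_nonneg (by linarith : 0 ≤ a), abs_of_nonpos (by linarith : b ≤ 0),
          abs_of_nonpos (by linarith : c ≤ 0)] at hn
        rw [abs_of_nonneg (by linarith : 0 ≤ -b), abs_of_nonpos (by linarith : a + 2 * b ≤ 0),
          abs_of_nonpos (by linarith : c ≤ 0)]
        linarith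
    -- moving X
    have key4 : ∀ (A B C X : ℤ × ℤ) (a b c : ℤ), A ∈ Γ → B ∈ Γ → C ∈ Γ →
        X ∈ Γ → |tdet A B C| = m → Bary m A B C X a b c →
        |a| + |b| + |c| ≤ (n + 1 : ℕ) → b ≤ -m → c ≤ -m → c - m ≤ b → b ≤ c →
        X ∈ Γ ∧ m ∣ a ∧ m ∣ b ∧ m ∣ c := by
      intro A B C X a b c hA hB hC hX hd hbar hn hb hc hbc hbc'
      obtain ⟨h1, h2, h3⟩ := hbar
      have hDP : X + B + C - A - A ∈ P := by
        refine hconv X (hΓP hX) C (hΓP hC) A (hΓP hA) _ (-b) (-b - m) (c - b) (m - c + b)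
          (by linarith) (by linarith) (by linarith) (by linarith) ?_ ?_ (by linarith)
        · simp only [Prod.fst_add, Prod.fst_sub]
          linear_combination h2 + A.1 * h1
        · simp only [Prod.snd_add, Prod.snd_sub]
          linear_combination h3 + A.2 * h1
      have hD := hcl X hX B hB C hC A hA A hA hDP
      have := ih A B C (X + B + C - A - A) (a - 2 * m) (b + m) (c + m) hA hB hC hDP (Or.inl hD) hd
        ⟨by linarith, ?_, ?_⟩ ?_
      · obtain ⟨r1, r2, r3, r4⟩ := this
        exact ⟨hX, (dvd_sub_left (Dvd.intro_left 2 rfl)).1 r2, (dvd_add_left dvd_rfl).1 r3,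
          (dvd_add_left dvd_rfl).1 r4⟩
      · simp only [Prod.fst_add, Prod.fst_sub]; linear_combination h2
      · simp only [Prod.snd_add, Prod.snd_sub]; linear_combination h3
      · push_cast at hn
        rw [abs_of_nonneg (by linarith : 0 ≤ a), abs_of_nonpos (by linarith : b ≤ 0),
          abs_of_nonpos (by linarith : c ≤ 0)] at hn
        rw [abs_of_nonneg (by linarith : 0 ≤ a - 2 * m), abs_of_nonpos (by linarith : b + m ≤ 0),
          abs_of_nonpos (by linarith : c + m ≤ 0)]
        linarith
    -- the double reflection
    have key3 : ∀ (A B C X : ℤ × ℤ) (a b c : ℤ), A ∈ Γ → B ∈ Γ → C ∈ Γ → X ∈ P →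
        (X ∈ Γ ∨ m = 1) → |tdet A B C| = m → Bary m A B C X a b c →
        |a| + |b| + |c| ≤ (n + 1 : ℕ) → b ≤ -m → b = c →
        X ∈ Γ ∧ m ∣ a ∧ m ∣ b ∧ m ∣ c := by
      intro A B C X a b c hA hB hC hX hX' hd hbar hn hb hbc
      subst hbc
      obtain ⟨h1, h2, h3⟩ := hbar
      have hDP : A + A + A - B - C ∈ P := by
        refine hconv X hX A (hΓP hA) A (hΓP hA) _ (-b) m (-b - m) 0 (by linarith) hm.le
          (by linarith) le_rfl ?_ ?_ (by linarith)
        · simp only [Prod.fst_add, Prod.fst_sub]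
          linear_combination -h2 - A.1 * h1
        · simp only [Prod.snd_add, Prod.snd_sub]
          linear_combination -h3 - A.2 * h1
      have hD := hcl A hA A hA A hA B hB C hC hDP
      have := ih A (A + A + A - B - C) C X (a + 3 * b) (-b) 0 hA hD hC hX hX' ?_
        ⟨by linarith, ?_, ?_⟩ ?_
      · obtain ⟨r1, r2, r3, r4⟩ := this
        have rb : m ∣ b := (dvd_neg).1 r3
        exact ⟨r1, (dvd_add_left (rb.mul_left 3)).1 r2, rb, rb⟩
      · rw [← hd, ← abs_neg]; congr 1
        unfold tdet; simp only [Prod.fst_add, Prod.fst_sub, Prod.snd_add, Prod.snd_sub]; ring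
      · simp only [Prod.fst_add, Prod.fst_sub]; linear_combination h2
      · simp only [Prod.snd_add, Prod.snd_sub]; linear_combination h3
      · push_cast at hn
        rw [abs_of_nonneg (by linarith : 0 ≤ a), abs_of_nonpos (by linarith : b ≤ 0)] at hn
        rw [abs_of_nonneg (by linarith : 0 ≤ -b), abs_of_nonpos (by linarith : a + 3 * b ≤ 0),
          abs_zero]
        linarith
    -- two negative coordinates
    have key5 : ∀ (A B C X : ℤ × ℤ) (a b c : ℤ), A ∈ Γ → B ∈ Γ → C ∈ Γ → X ∈ P →
        (X ∈ Γ ∨ m = 1) → |tdet A B C| = m → Bary m A B C X a b c →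
        |a| + |b| + |c| ≤ (n + 1 : ℕ) → b ≤ -m → (c = 0 ∨ c ≤ -m) → b ≤ c →
        X ∈ Γ ∧ m ∣ a ∧ m ∣ b ∧ m ∣ c := by
      intro A B C X a b c hA hB hC hX hX' hd hbar hn hb hc hbc
      by_cases h : b ≤ c - m
      · exact key2 A B C X a b c hA hB hC hX hX' hd hbar hn hb (by omega) h
      · by_cases h' : b = c
        · exact key3 A B C X a b c hA hB hC hX hX' hd hbar hn hb h'
        · exact key4 A B C X a b c hA hB hC (hX'.resolve_right (by omega)) hd hbar hn hb (by omega)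
            (by omega) hbc
    have key6 : ∀ (A B C X : ℤ × ℤ) (a b c : ℤ), A ∈ Γ → B ∈ Γ → C ∈ Γ → X ∈ P →
        (X ∈ Γ ∨ m = 1) → |tdet A B C| = m → Bary m A B C X a b c →
        |a| + |b| + |c| ≤ (n + 1 : ℕ) → (b = 0 ∨ b ≤ -m) → (c = 0 ∨ c ≤ -m) →
        X ∈ Γ ∧ m ∣ a ∧ m ∣ b ∧ m ∣ c := by
      intro A B C X a b c hA hB hC hX hX' hd hbar hn hb hc
      by_cases h0 : b = 0 ∧ c = 0
      · obtain ⟨rfl, rfl⟩ := h0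
        obtain ⟨h1, h2, h3⟩ := hbar
        have ha : a = m := by linarith
        subst ha
        have : X = A := by
          ext
          · exact mul_left_cancel₀ hm.ne' (by linarith)
          · exact mul_left_cancel₀ hm.ne' (by linarith)
        subst this
        exact ⟨hA, dvd_rfl, dvd_zero _, dvd_zero _⟩
      · rcases le_total b c with h | h
        · exact key5 A B C X a b c hA hB hC hX hX' hd hbar hn (by omega) hc h
        · obtain ⟨r1, r2, r3, r4⟩ := key5 A C B X a c b hA hC hB hX hX'
            ((abs_tdet_swap _ _ _).trans hd) hbar.swap (by linarith) (by omega) hb h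
          exact ⟨r1, r2, r4, r3⟩
    intro A B C X a b c hA hB hC hX hX' hd hbar hn
    have tri : ∀ (A B C : ℤ × ℤ) (a b c : ℤ), B ∈ Γ → C ∈ Γ → 
        |tdet A B C| = m → Bary m A B C X a b c → a = 0 ∨ m ≤ a ∨ a ≤ -m := by
      intro A B C a b c hB hC hd hbar
      rcases hX' with h | h
      · have e := hbar.abs_fst hm hd
        rcases hmin X h B hB C hC with h' | h'
        · rw [h', abs_zero] at e
          exact Or.inl (abs_eq_zero.1 e.symm)
        · rw [e] at h'
          rcases le_abs.1 h' with h'' | h'' <;> omega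
      · omega
    have hd2 : |tdet B C A| = m := (abs_tdet_rot _ _ _).trans hd
    have hd3 : |tdet C A B| = m := (abs_tdet_rot _ _ _).trans hd2
    have ta := tri A B C a b c hB hC hd hbar
    have tb := tri B C A b c a hC hA hd2 hbar.rot
    have tc := tri C A B c a b hA hB hd3 hbar.rot.rot
    have hs := hbar.1
    by_cases n1 : a ≤ -m ∧ m ≤ b ∧ m ≤ c
    · exact key1 A B C X a b c hA hB hC hX hX' hd hbar hn n1.1 n1.2.1 n1.2.2
    by_cases n2 : b ≤ -m ∧ m ≤ c ∧ m ≤ a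
    · obtain ⟨r1, r2, r3, r4⟩ := key1 B C A X b c a hB hC hA hX hX' hd2 hbar.rot (by linarith)
        n2.1 n2.2.1 n2.2.2
      exact ⟨r1, r4, r2, r3⟩
    by_cases n3 : c ≤ -m ∧ m ≤ a ∧ m ≤ b
    · obtain ⟨r1, r2, r3, r4⟩ := key1 C A B X c a b hC hA hB hX hX' hd3 hbar.rot.rot (by linarith)
        n3.1 n3.2.1 n3.2.2
      exact ⟨r1, r3, r4, r2⟩
    by_cases p1 : (b = 0 ∨ b ≤ -m) ∧ (c = 0 ∨ c ≤ -m)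
    · exact key6 A B C X a b c hA hB hC hX hX' hd hbar hn p1.1 p1.2
    by_cases p2 : (c = 0 ∨ c ≤ -m) ∧ (a = 0 ∨ a ≤ -m)
    · obtain ⟨r1, r2, r3, r4⟩ := key6 B C A X b c a hB hC hA hX hX' hd2 hbar.rot (by linarith)
        p2.1 p2.2
      exact ⟨r1, r4, r2, r3⟩
    by_cases p3 : (a = 0 ∨ a ≤ -m) ∧ (b = 0 ∨ b ≤ -m)
    · obtain ⟨r1, r2, r3, r4⟩ := key6 C A B X c a b hC hA hB hX hX' hd3 hbar.rot.rot (by linarith)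
        p3.1 p3.2
      exact ⟨r1, r3, r4, r2⟩
    exfalso
    clear key1 key2 key3 key4 key5 key6 tri ih hmin hcl hconv hn hd hd2 hd3 hbar hX'
    rcases ta with ta | ta | ta <;> rcases tb with tb | tb | tb <;> rcases tc with tc | tc | tc
    all_goals first
      | exact n1 ⟨ta, tb, tc⟩
      | exact n2 ⟨tb, tc, ta⟩
      | exact n3 ⟨tc, ta, tb⟩
      | exact p1 ⟨Or.inl tb, Or.inl tc⟩
      | exact p1 ⟨Or.inl tb, Or.inr tc⟩
      | exact p1 ⟨Or.inr tb, Or.inl tc⟩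
      | exact p1 ⟨Or.inr tb, Or.inr tc⟩
      | exact p2 ⟨Or.inl tc, Or.inl ta⟩
      | exact p2 ⟨Or.inl tc, Or.inr ta⟩
      | exact p2 ⟨Or.inr tc, Or.inl ta⟩
      | exact p2 ⟨Or.inr tc, Or.inr ta⟩
      | exact p3 ⟨Or.inl ta, Or.inl tb⟩
      | exact p3 ⟨Or.inl ta, Or.inr tb⟩
      | exact p3 ⟨Or.inr ta, Or.inl tb⟩
      | exact p3 ⟨Or.inr ta, Or.inr tb⟩
      | linarith

theorem core_main (h0 : (0 : ℤ × ℤ) ∈ Γ) (hΓP : Γ ⊆ P)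
    (hconv : ∀ p ∈ P, ∀ q ∈ P, ∀ r ∈ P, ∀ D : ℤ × ℤ, ∀ k a b c : ℤ, 0 < k → 0 ≤ a → 0 ≤ b → 0 ≤ c →
      k * D.1 = a * p.1 + b * q.1 + c * r.1 → k * D.2 = a * p.2 + b * q.2 + c * r.2 →
      a + b + c = k → D ∈ P)
    (hcl : ∀ a ∈ Γ, ∀ b ∈ Γ, ∀ c ∈ Γ, ∀ d ∈ Γ, ∀ e ∈ Γ, a + b + c - d - e ∈ P →
      a + b + c - d - e ∈ Γ)
    (hgen : ∀ L : AddSubgroup (ℤ × ℤ), Γ ⊆ L → L = ⊤) : P ⊆ Γ := by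
  -- a divisibility principle
  have hdiv : ∀ k u v : ℤ, (∀ p ∈ Γ, k ∣ u * p.1 + v * p.2) → k ∣ u ∧ k ∣ v := by
    intro k u v h
    let L : AddSubgroup (ℤ × ℤ) :=
      { carrier := {p | k ∣ u * p.1 + v * p.2}
        zero_mem' := by simp
        add_mem' := by
          intro a b ha hb
          have h2 : k ∣ u * (a.1 + b.1) + v * (a.2 + b.2) := by
            have h3 := dvd_add (show k ∣ u * a.1 + v * a.2 from ha) (show k ∣ u * b.1 + v * b.2 from hb)
            have e : u * (a.1 + b.1) + v * (a.2 + b.2)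
                = (u * a.1 + v * a.2) + (u * b.1 + v * b.2) := by ring
            rw [e]; exact h3
          exact h2
        neg_mem' := by
          intro a ha
          have h2 : k ∣ u * (-a.1) + v * (-a.2) := by
            have h3 := (dvd_neg).2 (show k ∣ u * a.1 + v * a.2 from ha)
            have e : u * (-a.1) + v * (-a.2) = -(u * a.1 + v * a.2) := by ring
            rw [e]; exact h3
          exact h2 }
    have hL := hgen L h
    have e1 : ((1, 0) : ℤ × ℤ) ∈ L := by rw [hL]; trivial
    have e2 : ((0, 1) : ℤ × ℤ) ∈ L := by rw [hL]; trivial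
    have e1' : k ∣ u * 1 + v * 0 := e1
    have e2' : k ∣ u * 0 + v * 1 := e2
    simp only [mul_one, mul_zero, add_zero, zero_add] at e1' e2'
    exact ⟨e1', e2'⟩
  have hex : ∃ n : ℕ, 0 < n ∧ ∃ A ∈ Γ, ∃ B ∈ Γ, ∃ C ∈ Γ, (tdet A B C).natAbs = n := by
    by_contra hcon
    have hz : ∀ p ∈ Γ, ∀ q ∈ Γ, tdet 0 p q = 0 := by
      intro p hp q hq
      by_contra hne
      exact hcon ⟨_, Int.natAbs_pos.2 hne, 0, h0, p, hp, q, hq, rfl⟩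
    have h1 : ∀ p ∈ Γ, (0 : ℤ) ∣ -p.2 ∧ (0 : ℤ) ∣ p.1 := by
      intro p hp
      apply hdiv
      intro q hq
      rw [zero_dvd_iff]
      have := hz p hp q hq
      unfold tdet at this
      simp only [Prod.fst_zero, Prod.snd_zero, sub_zero] at this
      linarith
    have h2 := (hdiv 0 1 0 (by
      intro p hp
      simpa using (h1 p hp).2)).1
    simp at h2
  obtain ⟨n, ⟨hpos, A, hA, B, hB, C, hC, hdet⟩, hmin'⟩ := exists_minimal_nat hex
  obtain ⟨m, hmdef⟩ : ∃ m : ℤ, m = n := ⟨_, rfl⟩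
  have hm : 0 < m := by omega
  have hmin : ∀ p ∈ Γ, ∀ q ∈ Γ, ∀ r ∈ Γ, tdet p q r = 0 ∨ m ≤ |tdet p q r| := by
    intro p hp q hq r hr
    by_contra! hcon
    refine hmin' (tdet p q r).natAbs ?_ ⟨Int.natAbs_pos.2 hcon.1, p, hp, q, hq, r, hr, rfl⟩
    have := hcon.2
    rw [Int.abs_eq_natAbs] at this
    omega
  obtain ⟨A, hA, B, hB, C, hC, hdet⟩ : ∃ A ∈ Γ, ∃ B ∈ Γ, ∃ C ∈ Γ, tdet A B C = m := by
    by_cases h : 0 ≤ tdet A B C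
    · exact ⟨A, hA, B, hB, C, hC, by omega⟩
    · refine ⟨A, hA, C, hC, B, hB, ?_⟩
      have : tdet A C B = - tdet A B C := by unfold tdet; ring
      omega
  have habs : |tdet A B C| = m := by rw [hdet, abs_of_pos hm]
  have main : ∀ X ∈ P, (X ∈ Γ ∨ m = 1) →
      X ∈ Γ ∧ m ∣ tdet X B C ∧ m ∣ tdet A X C ∧ m ∣ tdet A B X := by
    intro X hX hX'
    refine core_ind hΓP hconv hcl m hm hmin
      (|tdet X B C| + |tdet A X C| + |tdet A B X|).toNat A B C X _ _ _ hA hB hC hX hX' habs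
      ⟨?_, ?_, ?_⟩ (Int.self_le_toNat _)
    · rw [← hdet]; unfold tdet; ring
    · rw [← hdet]; unfold tdet; ring
    · rw [← hdet]; unfold tdet; ring
  have hm1 : m = 1 := by
    obtain ⟨_, -, o2, o3⟩ := main 0 (hΓP h0) (Or.inl h0)
    have hCA := hdiv m (C.2 - A.2) (-(C.1 - A.1)) (by
      intro p hp
      obtain ⟨_, -, q2, q3⟩ := main p (hΓP hp) (Or.inl hp)
      have e : (C.2 - A.2) * p.1 + -(C.1 - A.1) * p.2 = tdet A p C - tdet A 0 C := by
        unfold tdet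
        simp only [Prod.fst_zero, Prod.snd_zero]
        ring
      rw [e]
      exact dvd_sub q2 o2)
    have hBA := hdiv m (-(B.2 - A.2)) (B.1 - A.1) (by
      intro p hp
      obtain ⟨_, -, q2, q3⟩ := main p (hΓP hp) (Or.inl hp)
      have e : -(B.2 - A.2) * p.1 + (B.1 - A.1) * p.2 = tdet A B p - tdet A B 0 := by
        unfold tdet
        simp only [Prod.fst_zero, Prod.snd_zero]
        ring
      rw [e]
      exact dvd_sub q3 o3)
    have d1 : m * m ∣ tdet A B C :=
      dvd_sub (mul_dvd_mul hBA.2 hCA.1) (mul_dvd_mul ((dvd_neg).1 hBA.1) ((dvd_neg).1 hCA.2))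
    rw [hdet] at d1
    have := Int.le_of_dvd hm d1
    nlinarith
  intro X hX
  exact (main X hX (Or.inr hm1)).1

end core

theorem cosetGen_sub {d : ℕ} {Γ : Set (Fin d → ℤ)} (x₀ : Fin d → ℤ)
    (H : AddSubgroup (Fin d → ℤ)) (h : ∀ x ∈ Γ, x - x₀ ∈ H) : ∀ x ∈ cosetGen Γ, x - x₀ ∈ H := by
  intro x hx
  simp only [cosetGen, Set.mem_iUnion, Set.mem_image, SetLike.mem_coe] at hx
  obtain ⟨γ, hγ, y, hy, rfl⟩ := hx
  have hle : AddSubgroup.closure ((· - γ) '' Γ) ≤ H := by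
    rw [AddSubgroup.closure_le]
    rintro _ ⟨z, hz, rfl⟩
    have := H.sub_mem (h z hz) (h γ hγ)
    simpa using this
  have := H.add_mem (h γ hγ) (hle hy)
  convert this using 1
  abel

theorem mem_cosetGen_of {d : ℕ} {Γ : Set (Fin d → ℤ)} {x₀ x : Fin d → ℤ} (h0 : x₀ ∈ Γ)
    (h : x - x₀ ∈ AddSubgroup.closure ((· - x₀) '' Γ)) : x ∈ cosetGen Γ := by
  simp only [cosetGen, Set.mem_iUnion, Set.mem_image, SetLike.mem_coe]
  exact ⟨x₀, h0, _, h, by abel⟩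

theorem Eext_mem {d : ℕ} {Γ : Set (Fin d → ℤ)} {a b g c e : Fin d → ℤ}
    (ha : a ∈ Γ) (hb : b ∈ Γ) (hg : g ∈ Γ) (hc : c ∈ Γ) (he : e ∈ Γ)
    (hN : a + b + g - c - e ∈ NN d) : a + b + g - c - e ∈ Eext 2 Γ := by
  have hcl : ∀ x ∈ Γ, x - g ∈ AddSubgroup.closure ((· - g) '' Γ) := fun x hx =>
    AddSubgroup.subset_closure ⟨x, hx, rfl⟩
  refine ⟨⟨mem_cosetGen_of hg ?_, hN⟩, g, hg, ?_⟩
  · have := AddSubgroup.sub_mem _ (AddSubgroup.sub_mem _ (AddSubgroup.add_mem _ (hcl a ha) (hcl b hb))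
      (hcl c hc)) (hcl e he)
    convert this using 1
    abel
  let m₀ : (Fin d → ℤ) →₀ ℤ :=
    Finsupp.single a 1 + Finsupp.single b 1 - Finsupp.single c 1 - Finsupp.single e 1
  have hval : ∀ x, m₀ x = (if a = x then 1 else 0) + (if b = x then 1 else 0)
      - (if c = x then 1 else 0) - (if e = x then 1 else 0) := by
    intro x
    simp only [m₀, Finsupp.sub_apply, Finsupp.add_apply, Finsupp.single_apply]
  have hsum : ∀ (s : Finset (Fin d → ℤ)) (y z : Fin d → ℤ),
      ∑ x ∈ s, ((if y = x then 1 else 0) + (if z = x then 1 else 0) : ℤ) ≤ 2 := by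
    intro s y z
    rw [Finset.sum_add_distrib, Finset.sum_ite_eq, Finset.sum_ite_eq]
    split_ifs <;> norm_num
  have hle : ∀ x, (m₀.erase g) x = 0 ∨ (m₀.erase g) x = m₀ x := by
    intro x
    by_cases h : x = g
    · subst h; left; simp
    · right; exact Finsupp.erase_ne h
  refine ⟨m₀.erase g, ?_, ?_, ?_, ?_⟩
  · intro x hx
    rw [Finset.mem_coe, Finsupp.mem_support_iff] at hx
    have hxg : x ≠ g := by
      rintro rfl
      simp at hx
    rw [Finsupp.erase_ne hxg, hval] at hx
    refine ⟨?_, hxg⟩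
    by_contra hn
    apply hx
    rw [if_neg (by rintro rfl; exact hn ha), if_neg (by rintro rfl; exact hn hb),
      if_neg (by rintro rfl; exact hn hc), if_neg (by rintro rfl; exact hn he)]
    norm_num
  · have e1 : ∑ α ∈ (m₀.erase g).support, (m₀.erase g) α • (α - g)
        = Finsupp.linearCombination ℤ (fun α => α - g) (m₀.erase g) := rfl
    have e2 : Finsupp.linearCombination ℤ (fun α : Fin d → ℤ => α - g) m₀ =
        Finsupp.linearCombination ℤ (fun α => α - g) (m₀.erase g) := by
      conv_lhs => rw [← Finsupp.erase_add_single g m₀]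
      simp
    rw [e1, ← e2]
    simp only [m₀, map_add, map_sub, Finsupp.linearCombination_single, one_smul]
    abel
  · refine le_trans (Finset.sum_le_sum fun x _ => ?_) (hsum _ a b)
    rcases hle x with h | h
    · rw [h, max_self]; split_ifs <;> norm_num
    · rw [h, hval]; split_ifs <;> norm_num
  · refine le_trans (Finset.sum_le_sum fun x _ => ?_) (hsum _ c e)
    rcases hle x with h | h
    · rw [h, neg_zero, max_self]; split_ifs <;> norm_num
    · rw [h, hval]; split_ifs <;> norm_num

theorem subset_Eext {d : ℕ} {Γ : Set (Fin d → ℤ)} (h : Γ ⊆ NN d) : Γ ⊆ Eext 2 Γ := by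
  intro x hx
  have e : x + x + x - x - x = x := by abel
  have := Eext_mem hx hx hx hx hx (by rw [e]; exact h hx)
  rwa [e] at this

theorem Eext_NN {d : ℕ} (Γ : Set (Fin d → ℤ)) : Eext 2 Γ ⊆ NN d := fun _ hx => hx.1.2

theorem EextIter_NN {d : ℕ} (Γ : Set (Fin d → ℤ)) (k : ℕ) : EextIter 2 k Γ ⊆ NN d := by
  cases k <;> exact Eext_NN _

theorem EextIter_mono {d : ℕ} (Γ : Set (Fin d → ℤ)) : Monotone fun k => EextIter 2 k Γ :=
  monotone_nat_of_le_succ fun k => subset_Eext (EextIter_NN Γ k)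

theorem EextIter_coset {d : ℕ} {Γ : Set (Fin d → ℤ)} {x₀ : Fin d → ℤ}
    (H : AddSubgroup (Fin d → ℤ)) (h : ∀ x ∈ Γ, x - x₀ ∈ H) (k : ℕ) :
    ∀ x ∈ EextIter 2 k Γ, x - x₀ ∈ H := by
  induction k with
  | zero => exact fun x hx => cosetGen_sub x₀ H h x hx.1.1
  | succ k ih => exact fun x hx => cosetGen_sub x₀ H ih x hx.1.1

theorem EextInf_closed {d : ℕ} {Γ : Set (Fin d → ℤ)} {a b g c e : Fin d → ℤ}
    (ha : a ∈ EextInf 2 Γ) (hb : b ∈ EextInf 2 Γ) (hg : g ∈ EextInf 2 Γ) (hc : c ∈ EextInf 2 Γ)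
    (he : e ∈ EextInf 2 Γ) (hN : a + b + g - c - e ∈ NN d) :
    a + b + g - c - e ∈ EextInf 2 Γ := by
  simp only [EextInf, Set.mem_iUnion] at *
  obtain ⟨i1, ha⟩ := ha
  obtain ⟨i2, hb⟩ := hb
  obtain ⟨i3, hg⟩ := hg
  obtain ⟨i4, hc⟩ := hc
  obtain ⟨i5, he⟩ := he
  have M := EextIter_mono Γ
  refine ⟨i1 + i2 + i3 + i4 + i5 + 1, ?_⟩
  have a' := M (show i1 ≤ i1 + i2 + i3 + i4 + i5 by omega) ha
  have b' := M (show i2 ≤ i1 + i2 + i3 + i4 + i5 by omega) hb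
  have g' := M (show i3 ≤ i1 + i2 + i3 + i4 + i5 by omega) hg
  have c' := M (show i4 ≤ i1 + i2 + i3 + i4 + i5 by omega) hc
  have e' := M (show i5 ≤ i1 + i2 + i3 + i4 + i5 by omega) he
  exact Eext_mem a' b' g' c' e' hN

/-- For `d ≥ 3` and `T ⊆ ℕ₀^d` with `dim T = 2`, the `2`-completion of `T`
is `Λ(T) ∩ ℕ₀^d`. -/
theorem two_completion_of_dim_two (d : ℕ) (hd : 3 ≤ d) (T : Set (Fin d → ℤ))
    (hne : T.Nonempty) (hT : T ⊆ NN d) (hdim : HasDim T 2) :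
    EextInf 2 T = cosetGen T ∩ NN d := by
  obtain ⟨γ, hγ⟩ := hne
  have hself : ∀ x ∈ T, x - γ ∈ AddSubgroup.closure ((· - γ) '' T) := fun x hx =>
    AddSubgroup.subset_closure ⟨x, hx, rfl⟩
  apply Set.Subset.antisymm
  · intro x hx
    simp only [EextInf, Set.mem_iUnion] at hx
    obtain ⟨k, hk⟩ := hx
    exact ⟨mem_cosetGen_of hγ (EextIter_coset _ hself k x hk), EextIter_NN T k hk⟩
  rintro x ⟨hxc, hxN⟩
  have hTE : T ⊆ EextInf 2 T := fun y hy => Set.mem_iUnion.2 ⟨0, subset_Eext hT hy⟩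
  have hx := cosetGen_sub γ _ hself x hxc
  set S := Submodule.span ℤ ((· - γ) '' T) with hS
  have hclS : AddSubgroup.closure ((· - γ) '' T) ≤ S.toAddSubgroup := by
    rw [AddSubgroup.closure_le]
    exact Submodule.subset_span
  have hrank : Module.finrank ℤ S = 2 := hdim γ hγ
  let bs : Module.Basis (Fin 2) ℤ S := Module.finBasisOfFinrankEq ℤ S hrank
  let φ : ℤ × ℤ → (Fin d → ℤ) := fun p => p.1 • (bs 0 : Fin d → ℤ) + p.2 • (bs 1 : Fin d → ℤ)
  have hφ : ∀ p, φ p = p.1 • (bs 0 : Fin d → ℤ) + p.2 • (bs 1 : Fin d → ℤ) := fun _ => rfl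
  have hsurj : ∀ y ∈ S, ∃ p, φ p = y := by
    intro y hy
    refine ⟨(bs.repr ⟨y, hy⟩ 0, bs.repr ⟨y, hy⟩ 1), ?_⟩
    have := congrArg (Subtype.val) (bs.sum_repr ⟨y, hy⟩)
    rw [Fin.sum_univ_two] at this
    exact this
  have hinj : Function.Injective φ := by
    intro p q h
    have h' : (∑ i, (![p.1, p.2] i) • bs i) = ∑ i, (![q.1, q.2] i) • bs i := by
      apply Subtype.ext
      rw [Fin.sum_univ_two, Fin.sum_univ_two]
      exact h
    have h1 := congrArg (fun v => bs.repr v 0) h'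
    have h2 := congrArg (fun v => bs.repr v 1) h'
    simp only [Module.Basis.repr_sum_self] at h1 h2
    exact Prod.ext (by simpa using h1) (by simpa using h2)
  have hadd : ∀ p q, φ (p + q) = φ p + φ q := by
    intro p q; simp only [hφ, Prod.fst_add, Prod.snd_add, add_smul]; abel
  have hsub : ∀ p q, φ (p - q) = φ p - φ q := by
    intro p q; simp only [hφ, Prod.fst_sub, Prod.snd_sub, sub_smul]; abel
  have hφ0 : φ 0 = 0 := by simp [hφ]
  have hcore := core_main (Γ := {p | γ + φ p ∈ EextInf 2 T}) (P := {p | γ + φ p ∈ NN d})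
    ?_ ?_ ?_ ?_ ?_
  · obtain ⟨p, hp⟩ := hsurj _ (hclS hx)
    have hxp : γ + φ p = x := by rw [hp]; abel
    have := hcore (show γ + φ p ∈ NN d by rw [hxp]; exact hxN)
    rw [← hxp]
    exact this
  · simp only [Set.mem_ofPred_eq, hφ0, add_zero]
    exact hTE hγ
  · intro p hp
    obtain ⟨k, hk⟩ := Set.mem_iUnion.1 hp
    exact EextIter_NN T k hk
  · intro p hp q hq r hr D k a b c hk ha hb hc h1 h2 hs j
    have e : k * (γ + φ D) j = a * (γ + φ p) j + b * (γ + φ q) j + c * (γ + φ r) j := by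
      simp only [hφ, Pi.add_apply, Pi.smul_apply, smul_eq_mul]
      linear_combination (bs 0 : Fin d → ℤ) j * h1 + (bs 1 : Fin d → ℤ) j * h2 - γ j * hs
    have hnn : 0 ≤ k * (γ + φ D) j := by
      rw [e]
      exact add_nonneg (add_nonneg (mul_nonneg ha (hp j)) (mul_nonneg hb (hq j)))
        (mul_nonneg hc (hr j))
    exact nonneg_of_mul_nonneg_right hnn hk
  · intro a ha b hb c hc d' hd' e he hP
    have key : γ + φ (a + b + c - d' - e) =
        (γ + φ a) + (γ + φ b) + (γ + φ c) - (γ + φ d') - (γ + φ e) := by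
      rw [hsub, hsub, hadd, hadd]; abel
    simp only [Set.mem_ofPred_eq] at *
    rw [key] at hP ⊢
    exact EextInf_closed ha hb hc hd' he hP
  · intro L hL
    let Φ : ℤ × ℤ →+ (Fin d → ℤ) := ⟨⟨φ, hφ0⟩, hadd⟩
    have hle : S ≤ AddSubgroup.toIntSubmodule (L.map Φ) := by
      rw [hS, Submodule.span_le]
      rintro _ ⟨t, ht, rfl⟩
      obtain ⟨p, hp⟩ := hsurj (t - γ) (Submodule.subset_span ⟨t, ht, rfl⟩)
      refine ⟨p, hL ?_, hp⟩
      have : γ + φ p = t := by rw [hp]; abel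
      rw [Set.mem_ofPred_eq, this]
      exact hTE ht
    rw [eq_top_iff]
    intro p _
    have hpS : φ p ∈ S := S.add_mem (S.smul_mem _ (bs 0).2) (S.smul_mem _ (bs 1).2)
    obtain ⟨q, hq, hqp⟩ := hle hpS
    have : q = p := hinj hqp
    rwa [← this]

end
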